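/- Let G be a group acting faithfully on a set Z. Suppose Z contains a subset Z₀ and G contains an element g such that: (i) for every finite subset S of G there exists t ∈ G such that every element of t S t⁻¹ is supported in Z₀ (i.e. fixes every point of Z outside Z₀); and (ii) the set g^p • Z₀ is disjoint from Z₀ for every integer p ≥ 1. Then Hb^n(G, E) = 0 holds for all n ≥ 1 and all separable dual Banach G-modules E; in particular G is boundedly acyclic. -/

import Mathlib

open scoped BigOperators

/-- A cochain (function into a normed space) is bounded if its norms are uniformly bounded. -/
def IsBddCochain {G : Type*} {E : Type*} [NormedAddCommGroup E] {n : ℕ}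
    (f : (Fin n → G) → E) : Prop :=
  ∃ C : ℝ, ∀ g, ‖f g‖ ≤ C

/-- The inhomogeneous coboundary operator of bounded cohomology, for an action `π` of
`G` on `E`:
`(δf)(g₁,…,g_{n+1}) = g₁•f(g₂,…,g_{n+1}) + ∑_{i=1}^{n} (−1)^i f(g₁,…,g_i·g_{i+1},…,g_{n+1})`
`+ (−1)^{n+1} f(g₁,…,g_n)`. -/
def bddDelta {G : Type*} [Group G] {E : Type*} [NormedAddCommGroup E] [Module ℝ E]
    (π : G → E → E) (n : ℕ) (f : (Fin n → G) → E) : (Fin (n + 1) → G) → E :=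
  fun g =>
    π (g 0) (f (fun j => g j.succ)) +
    (∑ i : Fin n, ((-1 : ℝ) ^ ((i : ℕ) + 1)) •
      f (fun j => if (j : ℕ) < (i : ℕ) then g (Fin.castSucc j)
        else if (j : ℕ) = (i : ℕ) then g (Fin.castSucc j) * g j.succ
        else g j.succ)) +
    ((-1 : ℝ) ^ (n + 1)) • f (fun j => g (Fin.castSucc j))

/-- Vanishing of the bounded cohomology `Hb^n(G,E)` for all `n ≥ 1`, with respect to the
`G`-action `π` on `E`: every bounded cocycle of degree `n ≥ 1` is the coboundary of a
bounded cochain. -/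
def HbVanish {G : Type*} [Group G] {E : Type*} [NormedAddCommGroup E] [Module ℝ E]
    (π : G → E → E) : Prop :=
  ∀ (n : ℕ) (f : (Fin (n + 1) → G) → E), IsBddCochain f →
    bddDelta π (n + 1) f = 0 →
    ∃ b : (Fin n → G) → E, IsBddCochain b ∧ bddDelta π n b = f

/-- A group is boundedly acyclic if `Hb^n(G,ℝ) = 0` for all `n ≥ 1`, where `ℝ` carries
the trivial `G`-action. -/
def BoundedlyAcyclic (G : Type*) [Group G] : Prop :=
  HbVanish (G := G) (E := ℝ) (fun _ v => v)

/-- The contragredient action of `G` on the continuous dual of `F` induced by an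
isometric action `ρ` of `G` on `F`: `(g • φ)(v) = φ (g⁻¹ • v)`. -/
def contragredient {G : Type*} [Group G] {F : Type*} [NormedAddCommGroup F]
    [NormedSpace ℝ F] (ρ : G →* (F ≃ₗᵢ[ℝ] F)) : G → (F →L[ℝ] ℝ) → (F →L[ℝ] ℝ) :=
  fun g φ => φ.comp (ρ g⁻¹).toLinearIsometry.toContinuousLinearMap

/-!
If `g` moves `Z₀` off itself and `t S t⁻¹` is supported in `Z₀`, then `S` commutes with its
conjugate by `t⁻¹ g t`. So every finite `S ⊆ G` commutes elementwise with one of its conjugates,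
and inductively there are conjugates `t_l S t_l⁻¹`, `l ∈ ℕ`, commuting with each other. This alone
implies the vanishing.

Let `Φ` be a bounded homogeneous cocycle of degree `m` and let `ψ_k` be the product over `l < N` of
`t_l a_l t_l⁻¹`, for random `a_l ∈ S`. Up to the coboundary of a bounded cochain (a prism, averaged
over all permutations `σ` so that its faces agree), `Φ (y₀, …, yₘ)` is the mean of
`Φ (y₀ ψ_σ(0), …, yₘ ψ_σ(m))`. Omit the `i`-th factor of the products and multiply by `t_i⁻¹`: since
the conjugates commute, the arguments `y_k ∈ S` then occur only as the values of the missing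
`i`-th factor. For real functions of many independent variables, Bessel's inequality says that
fixing one of them hardly changes the mean, except for boundedly many `i`. For values in `F*` this
gives weak-* convergence of the conditional means as `i → ∞`; separability of `F*` and Baire's
theorem provide a conditioning at which it upgrades to closeness in norm. Hence `Φ` is cohomologous
to a cocycle `K` that is almost constant on `Sᵐ⁺¹`.

Such a `K` is almost the coboundary of `y ↦ K (y₀, y₀, y₁, …)`. The resulting approximate
primitives of `Φ` are bounded uniformly in `S`, and a weak-* limit over `S` is a primitive.
-/

section HomogeneousCochains

variable {X Y E E' : Type*} [AddCommGroup E] [Module ℝ E] [AddCommGroup E'] [Module ℝ E']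

/-- The homogeneous coboundary: the alternating sum of the values of `h` on the faces of `y`. A
function of `n + 1` variables is a homogeneous cochain of degree `n`. -/
def homDelta {m : ℕ} (h : (Fin m → X) → E) (y : Fin (m + 1) → X) : E :=
  ∑ j : Fin (m + 1), (-1 : ℝ) ^ (j : ℕ) • h (y ∘ j.succAbove)

theorem homDelta_add {m : ℕ} (h h' : (Fin m → X) → E) (y : Fin (m + 1) → X) :
    homDelta (fun v => h v + h' v) y = homDelta h y + homDelta h' y := by
  simp only [homDelta, smul_add, Finset.sum_add_distrib]

theorem homDelta_sub {m : ℕ} (h h' : (Fin m → X) → E) (y : Fin (m + 1) → X) :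
    homDelta (fun v => h v - h' v) y = homDelta h y - homDelta h' y := by
  simp only [homDelta, smul_sub, Finset.sum_sub_distrib]

theorem homDelta_cons {m : ℕ} (h : (Fin (m + 1) → X) → E) (a : X) (w : Fin (m + 1) → X) :
    homDelta h (Fin.cons a w) = h w - homDelta (fun v => h (Fin.cons a v)) w := by
  have face (j : Fin (m + 1)) : (Fin.cons a w : Fin (m + 2) → X) ∘ j.succ.succAbove =
      Fin.cons a (w ∘ j.succAbove) := by
    funext k
    cases k using Fin.cases <;> simp
  have face_zero : (Fin.cons a w : Fin (m + 2) → X) ∘ Fin.succAbove 0 = w := by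
    funext k
    simp
  rw [homDelta, Fin.sum_univ_succ, face_zero, homDelta, sub_eq_add_neg, ← Finset.sum_neg_distrib]
  simp only [face, Fin.val_zero, pow_zero, one_smul, Fin.val_succ, pow_succ, mul_neg_one, neg_smul]

theorem homDelta_homDelta {m : ℕ} (h : (Fin m → X) → E) (y : Fin (m + 2) → X) :
    homDelta (homDelta h) y = 0 := by
  induction m with
  | zero => simp [homDelta, Subsingleton.elim _ (![] : Fin 0 → X)]
  | succ m ih =>
    rw [← Fin.cons_self_tail y, homDelta_cons]
    simp only [homDelta_cons, homDelta_sub, sub_sub_cancel]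
    exact ih _ _

theorem norm_homDelta_le {E : Type*} [NormedAddCommGroup E] [NormedSpace ℝ E] {m : ℕ}
    {h : (Fin m → X) → E} {C : ℝ} (hC : ∀ v, ‖h v‖ ≤ C) (y : Fin (m + 1) → X) :
    ‖homDelta h y‖ ≤ (m + 1) * C := by
  refine (norm_sum_le_of_le (n := fun _ => C) _ fun j _ => ?_).trans_eq (by simp)
  simpa [norm_smul] using hC _

/-- The homotopy between the two coordinate projections of homogeneous cochains, that is, the
alternating sum of `F` over the simplices `(x₀, …, xᵢ, yᵢ, …, yₙ)` triangulating a prism whose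
vertical edges are the pairs `w i = (xᵢ, yᵢ)`. -/
def prism : {n : ℕ} → ((Fin (n + 1) → X) → E) → (Fin n → X × X) → E
  | 0, _, _ => 0
  | _ + 1, F, w =>
    F (Fin.cons (w 0).1 (Prod.snd ∘ w)) - prism (fun v => F (Fin.cons (w 0).1 v)) (Fin.tail w)

theorem prism_sub {E : Type*} [AddCommGroup E] {n : ℕ} (F F' : (Fin (n + 1) → X) → E)
    (w : Fin n → X × X) :
    prism (fun v => F v - F' v) w = prism F w - prism F' w := by
  induction n with
  | zero => simp only [prism, sub_zero]
  | succ n ih => simp only [prism, ih, sub_sub_sub_comm]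

theorem prism_comp_map {n : ℕ} {φ : X → Y} (T : E →ₗ[ℝ] E') {F : (Fin (n + 1) → X) → E}
    {F' : (Fin (n + 1) → Y) → E'}
    (h : ∀ v, F' (φ ∘ v) = T (F v)) (w : Fin n → X × X) :
    prism F' (Prod.map φ φ ∘ w) = T (prism F w) := by
  induction n with
  | zero => simp only [prism, map_zero]
  | succ n ih =>
    have h_cons (a : X) (v : Fin (n + 1) → X) :
        F' (Fin.cons (φ a) (φ ∘ v)) = T (F (Fin.cons a v)) := by
      rw [← h, Fin.comp_cons]
    rw [prism, prism, map_sub, ← h_cons, ← ih (F' := fun v => F' (Fin.cons (φ (w 0).1) v))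
      (h_cons (w 0).1)]
    rfl

theorem norm_prism_le {E : Type*} [NormedAddCommGroup E] {n : ℕ} {F : (Fin (n + 1) → X) → E}
    {C : ℝ} (hF : ∀ v, ‖F v‖ ≤ C) (w : Fin n → X × X) :
    ‖prism F w‖ ≤ n * C := by
  induction n with
  | zero => simp [prism]
  | succ n ih =>
    calc ‖prism F w‖ ≤ C + n * C :=
          (norm_sub_le _ _).trans (add_le_add (hF _) (ih (fun _ => hF _) _))
      _ = (n + 1 : ℕ) * C := by push_cast; ring

theorem homDelta_prism_add_prism_homDelta {n : ℕ} (F : (Fin (n + 1) → X) → E)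
    (w : Fin (n + 1) → X × X) :
    homDelta (prism F) w + prism (homDelta F) w = F (Prod.snd ∘ w) - F (Prod.fst ∘ w) := by
  induction n with
  | zero =>
    let v : Fin 2 → X := Fin.cons (w 0).1 (Prod.snd ∘ w)
    have h_fst : Prod.fst ∘ w = v ∘ Fin.succAbove 1 := by
      funext k
      fin_cases k
      rfl
    have h_snd : Prod.snd ∘ w = v ∘ Fin.succAbove 0 := by
      funext k
      simp [v]
    rw [h_fst, h_snd]
    simp [v, prism, homDelta, sub_eq_add_neg]
  | succ n ih =>
    obtain ⟨a, u, rfl⟩ : ∃ a u, w = Fin.cons a u := ⟨w 0, Fin.tail w, (Fin.cons_self_tail w).symm⟩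
    let Fa : (Fin (n + 1) → X) → E := fun v => F (Fin.cons a.1 v)
    have h_left : homDelta (prism F) (Fin.cons a u) = prism F u -
        (homDelta (fun v => Fa (Fin.cons a.2 v)) (Prod.snd ∘ u) - homDelta (prism Fa) u) := by
      rw [homDelta_cons]
      simp only [prism, Fin.cons_zero, Fin.tail_cons, Fin.comp_cons, homDelta_sub]
      rfl
    have h_right : prism (homDelta F) (Fin.cons a u) = F (Fin.cons a.2 (Prod.snd ∘ u)) -
        (Fa (Prod.snd ∘ u) - homDelta (fun v => Fa (Fin.cons a.2 v)) (Prod.snd ∘ u)) -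
        (prism F u - prism (homDelta Fa) u) := by
      rw [prism]
      simp only [Fin.cons_zero, Fin.tail_cons, Fin.comp_cons, homDelta_cons, prism_sub]
      rfl
    calc homDelta (prism F) (Fin.cons a u) + prism (homDelta F) (Fin.cons a u)
        = F (Fin.cons a.2 (Prod.snd ∘ u)) - Fa (Prod.snd ∘ u) +
            (homDelta (prism Fa) u + prism (homDelta Fa) u) := by rw [h_left, h_right]; abel
      _ = F (Fin.cons a.2 (Prod.snd ∘ u)) - F (Fin.cons a.1 (Prod.fst ∘ u)) := by
          rw [ih Fa u, sub_add_sub_cancel]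
      _ = F (Prod.snd ∘ Fin.cons a u) - F (Prod.fst ∘ Fin.cons a u) := by
          rw [Fin.comp_cons, Fin.comp_cons]

/-- The operator `K ↦ (y ↦ K (y₀, y₀, y₁, …))`. For a cocycle `K`, the coboundary of the result is
`K (y₁, y₁, y₂, …)`, which is close to `K` if `K` is almost constant. -/
def duplicateHead {m : ℕ} (K : (Fin (m + 2) → X) → E) (y : Fin (m + 1) → X) : E :=
  K (Fin.cons (y 0) y)

theorem homDelta_duplicateHead {m : ℕ} {K : (Fin (m + 2) → X) → E} (hK : homDelta K = 0)
    (y : Fin (m + 2) → X) :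
    homDelta (duplicateHead K) y = duplicateHead K (Fin.tail y) := by
  obtain ⟨a, u, rfl⟩ : ∃ a u, y = Fin.cons a u := ⟨y 0, Fin.tail y, (Fin.cons_self_tail y).symm⟩
  have h_zero : homDelta (fun v => K (Fin.cons a (Fin.cons a v))) u = 0 := by
    have h := congrFun hK (Fin.cons a (Fin.cons a u))
    rwa [homDelta_cons, homDelta_cons, sub_sub_cancel] at h
  rw [homDelta_cons, Fin.tail_cons]
  simp only [duplicateHead, Fin.cons_zero, h_zero, sub_zero]

end HomogeneousCochains

section EquivariantCochains

variable {G ι E : Type*} [Group G] [AddCommGroup E] [Module ℝ E] {π : Representation ℝ G E}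

/-- Equivariance for the diagonal left translation action on the variables, the condition
which singles out the homogeneous cochains with coefficients in `π` among all functions. -/
def IsEquivariant (π : Representation ℝ G E) (Φ : (ι → G) → E) : Prop :=
  ∀ h y, Φ (h • y) = π h (Φ y)

theorem IsEquivariant.homDelta {m : ℕ} {Φ : (Fin m → G) → E} (hΦ : IsEquivariant π Φ) :
    IsEquivariant π (homDelta Φ) := fun h y => by
  have face (j : Fin (m + 1)) : (h • y) ∘ j.succAbove = h • (y ∘ j.succAbove) := rfl
  simp only [_root_.homDelta, map_sum, map_smul, face, hΦ h]

theorem IsEquivariant.duplicateHead {m : ℕ} {K : (Fin (m + 2) → G) → E} (hK : IsEquivariant π K) :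
    IsEquivariant π (duplicateHead K) := fun h y => by
  refine Eq.trans (congrArg K (funext fun k => ?_)) (hK h (Fin.cons (y 0) y))
  cases k using Fin.cases <;> rfl

/-- The homogeneous cochain attached to an inhomogeneous one. -/
def homogenize (π : Representation ℝ G E) {n : ℕ}
    (f : (Fin n → G) → E) (y : Fin (n + 1) → G) : E :=
  π (y 0) (f fun j => (y j.castSucc)⁻¹ * y j.succ)

theorem isEquivariant_homogenize (π : Representation ℝ G E) {n : ℕ}
    (f : (Fin n → G) → E) : IsEquivariant π (homogenize π f) := fun h y => by
  simp only [homogenize, Pi.smul_apply, smul_eq_mul, mul_inv_rev, map_mul, Module.End.mul_apply,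
    mul_assoc, inv_mul_cancel_left]

theorem homogenize_partialProd (π : Representation ℝ G E) {n : ℕ}
    (f : (Fin n → G) → E) (g : Fin n → G) : homogenize π f (Fin.partialProd g) = f g := by
  simp only [homogenize, Fin.partialProd_zero, map_one, Module.End.one_apply,
    Fin.partialProd_right_inv]

end EquivariantCochains

section InhomogeneousCochains

variable {G E : Type*} [Group G] [NormedAddCommGroup E] [NormedSpace ℝ E] {π : Representation ℝ G E}

theorem bddDelta_eq_sum_contractNth (π : Representation ℝ G E) {n : ℕ} (f : (Fin n → G) → E)
    (g : Fin (n + 1) → G) :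
    bddDelta (fun h => π h) n f g = π (g 0) (f (Fin.tail g)) +
      ∑ j : Fin (n + 1), (-1 : ℝ) ^ (j + 1 : ℕ) • f (j.contractNth (· * ·) g) := by
  have h_last : (Fin.last n).contractNth (· * ·) g = fun j => g j.castSucc :=
    funext fun j => Fin.contractNth_apply_of_lt _ _ _ _ j.isLt
  rw [Fin.sum_univ_castSucc, h_last, Fin.val_last, ← add_assoc]
  rfl

theorem bddDelta_comp_partialProd {n : ℕ} {b : (Fin (n + 1) → G) → E} (hb : IsEquivariant π b)
    (g : Fin (n + 1) → G) :
    bddDelta (fun h => π h) n (b ∘ Fin.partialProd) g = homDelta b (Fin.partialProd g) := by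
  have face_zero : Fin.partialProd g ∘ Fin.succAbove 0 = g 0 • Fin.partialProd (Fin.tail g) :=
    funext fun j => Fin.partialProd_succ' g j
  rw [bddDelta_eq_sum_contractNth, homDelta, Fin.sum_univ_succ (n := n + 1), face_zero, hb]
  simp only [Function.comp_apply, Fin.partialProd_contractNth, Fin.val_zero, pow_zero, one_smul,
    Fin.val_succ]

theorem homDelta_homogenize (π : Representation ℝ G E) {n : ℕ} (f : (Fin n → G) → E) :
    homDelta (homogenize π f) = homogenize π (bddDelta (fun h => π h) n f) := by
  have h_cocycle (g : Fin (n + 1) → G) :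
      homDelta (homogenize π f) (Fin.partialProd g) = bddDelta (fun h => π h) n f g := by
    rw [← bddDelta_comp_partialProd (isEquivariant_homogenize π f)]
    rw [show homogenize π f ∘ Fin.partialProd = f from funext (homogenize_partialProd π f)]
  funext y
  rw [← Fin.partialProd_left_inv y, (isEquivariant_homogenize π f).homDelta, h_cocycle,
    isEquivariant_homogenize π, homogenize_partialProd]

theorem hbVanish_of_homogeneous (hπ : ∀ g v, ‖π g v‖ = ‖v‖)
    (h : ∀ (n : ℕ) (Φ : (Fin (n + 2) → G) → E) (C : ℝ), IsEquivariant π Φ → (∀ y, ‖Φ y‖ ≤ C) →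
      homDelta Φ = 0 → ∃ b : (Fin (n + 1) → G) → E, IsEquivariant π b ∧ IsBddCochain b ∧
        homDelta b = Φ) :
    HbVanish (fun g => π g) := by
  rintro n f ⟨C, hC⟩ hf
  obtain ⟨b, hb, ⟨B, hB⟩, hbf⟩ := h n (homogenize π f) C (isEquivariant_homogenize π f)
    (fun y => (hπ _ _).trans_le (hC _))
    (by rw [homDelta_homogenize, hf]; exact funext fun y => map_zero _)
  refine ⟨b ∘ Fin.partialProd, ⟨B, fun g => hB _⟩, funext fun g => ?_⟩
  rw [bddDelta_comp_partialProd hb, hbf, homogenize_partialProd]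

end InhomogeneousCochains

section Symmetrization

theorem norm_expect_le_of_forall_le {ι E : Type*} [NormedAddCommGroup E] [NormedSpace ℝ E]
    [Module ℚ≥0 E] [IsScalarTower ℚ≥0 ℝ E] [Fintype ι] [Nonempty ι] {f : ι → E} {C : ℝ}
    (hf : ∀ i, ‖f i‖ ≤ C) : ‖𝔼 i, f i‖ ≤ C :=
  calc ‖𝔼 i, f i‖ ≤ 𝔼 i, ‖f i‖ := Finset.le_expect_of_subadditive norm_zero norm_add_le
        fun q v => by
          rw [← NNRat.cast_smul_eq_nnqsmul ℝ, norm_smul, Real.norm_of_nonneg (NNRat.cast_nonneg _),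
            ← smul_eq_mul, NNRat.cast_smul_eq_nnqsmul]
    _ ≤ C := Finset.expect_le Finset.univ_nonempty fun i _ => hf i

variable {G E : Type*} [Group G] [AddCommGroup E] [Module ℝ E] [Module ℚ≥0 E] {m : ℕ}

/-- A homogeneous cochain cobounding the difference between a cocycle `Φ` and the average over
all permutations `σ` of its values `Φ (y₀ ψ_σ(0), …, yₘ ψ_σ(m))`. -/
noncomputable def symmPrism (Φ : (Fin (m + 1) → G) → E) (ψ : Fin (m + 1) → G) (y : Fin m → G) :
    E :=
  𝔼 σ : Equiv.Perm (Fin (m + 1)), prism Φ fun k => (y k, y k * ψ (σ k.succ))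

theorem expect_perm_eq_add_homDelta_symmPrism {Φ : (Fin (m + 1) → G) → E} (hΦ : homDelta Φ = 0)
    (ψ : Fin (m + 1) → G) (y : Fin (m + 1) → G) :
    𝔼 σ : Equiv.Perm (Fin (m + 1)), Φ (fun k => y k * ψ (σ k)) =
      Φ y + homDelta (symmPrism Φ ψ) y := by
  let w (σ : Equiv.Perm (Fin (m + 1))) (k : Fin (m + 1)) : G × G := (y k, y k * ψ (σ k))
  have h_face (j : Fin (m + 1)) :
      symmPrism Φ ψ (y ∘ j.succAbove) = 𝔼 σ, prism Φ (w σ ∘ j.succAbove) := by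
    refine Fintype.expect_equiv (Equiv.mulRight j.cycleRange) _ _ fun σ => ?_
    congr 1
    funext k
    simp [w]
  have h_homotopy (σ : Equiv.Perm (Fin (m + 1))) :
      homDelta (prism Φ) (w σ) = Φ (fun k => y k * ψ (σ k)) - Φ y := by
    have h := homDelta_prism_add_prism_homDelta Φ (w σ)
    have h_zero : prism (homDelta Φ) (w σ) = 0 := by
      simpa only [hΦ, sub_self] using! prism_sub (homDelta Φ) (homDelta Φ) (w σ)
    rwa [h_zero, add_zero] at h
  calc 𝔼 σ : Equiv.Perm (Fin (m + 1)), Φ (fun k => y k * ψ (σ k))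
      = Φ y + 𝔼 σ, homDelta (prism Φ) (w σ) := by
        simp only [h_homotopy, Finset.expect_sub_distrib, Fintype.expect_const,
          add_sub_cancel]
    _ = Φ y + homDelta (symmPrism Φ ψ) y := by
        simp only [homDelta, h_face, Finset.expect_sum_comm, Finset.smul_expect]

theorem homDelta_expect {X ι : Type*} [Fintype ι]
    (b : ι → (Fin m → X) → E) (y : Fin (m + 1) → X) :
    homDelta (fun v => 𝔼 i, b i v) y = 𝔼 i, homDelta (b i) y := by
  simp only [homDelta, Finset.expect_sum_comm, Finset.smul_expect]

theorem isEquivariant_expect [IsScalarTower ℚ≥0 ℝ E] {π : Representation ℝ G E} {ι κ : Type*}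
    [Fintype ι] {b : ι → (κ → G) → E} (hb : ∀ i, IsEquivariant π (b i)) :
    IsEquivariant π fun y => 𝔼 i, b i y := fun h y => by
  simp only [hb _ h y]
  exact (map_expect ((π h).restrictScalars ℚ≥0) _ _).symm

theorem isEquivariant_symmPrism [IsScalarTower ℚ≥0 ℝ E] {π : Representation ℝ G E}
    {Φ : (Fin (m + 1) → G) → E} (hΦ : IsEquivariant π Φ) (ψ : Fin (m + 1) → G) :
    IsEquivariant π (symmPrism Φ ψ) := isEquivariant_expect fun σ h y => by
  rw [← prism_comp_map (φ := fun x => h * x) (π h) (fun v => hΦ h v)]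
  simp only [Pi.smul_apply, smul_eq_mul, mul_assoc]
  rfl

theorem norm_symmPrism_le {E : Type*} [NormedAddCommGroup E] [NormedSpace ℝ E] [Module ℚ≥0 E]
    [IsScalarTower ℚ≥0 ℝ E] {Φ : (Fin (m + 1) → G) → E} {C : ℝ} (hΦ : ∀ y, ‖Φ y‖ ≤ C)
    (ψ : Fin (m + 1) → G) (y : Fin m → G) : ‖symmPrism Φ ψ y‖ ≤ m * C :=
  norm_expect_le_of_forall_le fun _ => norm_prism_le hΦ _

end Symmetrization

section Bessel

open Function

theorem sum_sq_expect_mul_le {Ω ι : Type*} [Fintype Ω] {I : Finset ι}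
    {u : ι → Ω → ℝ} {φ : Ω → ℝ} {κ C : ℝ} (hκ : 0 < κ)
    (h_sq : ∀ i ∈ I, 𝔼 ω, u i ω ^ 2 ≤ κ)
    (h_orth : ∀ i ∈ I, ∀ j ∈ I, i ≠ j → 𝔼 ω, u i ω * u j ω = 0) (hφ : 𝔼 ω, φ ω ^ 2 ≤ C) :
    ∑ i ∈ I, (𝔼 ω, φ ω * u i ω) ^ 2 ≤ κ * C := by
  let c (i : ι) : ℝ := 𝔼 ω, φ ω * u i ω
  let w (ω : Ω) : ℝ := ∑ i ∈ I, c i * u i ω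
  let s : ℝ := ∑ i ∈ I, c i ^ 2
  have h_inner : 𝔼 ω, φ ω * w ω = s := by
    simp only [w, s, Finset.mul_sum, Finset.expect_sum_comm]
    refine Finset.sum_congr rfl fun i _ => ?_
    simp only [mul_left_comm (φ _) (c i), ← Finset.mul_expect]
    exact (sq (c i)).symm
  have h_norm : 𝔼 ω, w ω ^ 2 ≤ κ * s :=
    calc 𝔼 ω, w ω ^ 2 = ∑ i ∈ I, ∑ j ∈ I, c i * c j * 𝔼 ω, u i ω * u j ω := by
          simp only [w, sq, Finset.sum_mul_sum, Finset.expect_sum_comm, Finset.mul_expect,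
            mul_mul_mul_comm]
      _ = ∑ i ∈ I, c i ^ 2 * 𝔼 ω, u i ω ^ 2 := by
          refine Finset.sum_congr rfl fun i hi => ?_
          rw [Finset.sum_eq_single_of_mem i hi fun j hj hji => by
            rw [h_orth i hi j hj hji.symm, mul_zero]]
          simp only [sq]
      _ ≤ κ * s := by
          rw [Finset.mul_sum]
          refine Finset.sum_le_sum fun i hi => ?_
          rw [mul_comm κ]
          exact mul_le_mul_of_nonneg_left (h_sq i hi) (sq_nonneg _)
  have h_expand : 𝔼 ω, (κ * φ ω - w ω) ^ 2 =
      κ ^ 2 * 𝔼 ω, φ ω ^ 2 - 2 * κ * 𝔼 ω, φ ω * w ω + 𝔼 ω, w ω ^ 2 := by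
    simp only [Finset.mul_expect, ← Finset.expect_sub_distrib, ← Finset.expect_add_distrib]
    exact Finset.expect_congr rfl fun ω _ => by ring
  have h_nonneg : 0 ≤ 𝔼 ω, (κ * φ ω - w ω) ^ 2 := Finset.expect_nonneg fun ω _ => sq_nonneg _
  have h_le : κ * s ≤ κ * (κ * C) := by nlinarith [mul_le_mul_of_nonneg_left hφ (sq_nonneg κ)]
  exact le_of_mul_le_mul_left h_le hκ

variable {ι A : Type*} [Fintype ι] [DecidableEq ι] [Fintype A]

theorem expect_expect_update [Nonempty A] (i : ι) (f : (ι → A) → ℝ) :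
    𝔼 x, 𝔼 c, f (update x i c) = 𝔼 x, f x := by
  have h_inv : Involutive fun p : (ι → A) × A => (update p.1 i p.2, p.1 i) := fun p => by simp
  calc 𝔼 x, 𝔼 c, f (update x i c) = 𝔼 p : (ι → A) × A, f (update p.1 i p.2) :=
        (Finset.expect_product' _ _ _).symm
    _ = 𝔼 p : (ι → A) × A, f p.1 := Fintype.expect_equiv h_inv.toPerm _ _ fun _ => rfl
    _ = 𝔼 x, 𝔼 _c : A, f x := Finset.expect_product' _ _ fun x _ => f x
    _ = 𝔼 x, f x := by simp only [Fintype.expect_const]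

open Classical in
/-- The centred and normalised indicator of the event `c = b` for a uniformly random `c : A`. -/
noncomputable def centredIndicator (b c : A) : ℝ :=
  (if c = b then (Fintype.card A : ℝ) else 0) - 1

theorem expect_mul_centredIndicator (b : A) (f : A → ℝ) :
    𝔼 c, f c * centredIndicator b c = f b - 𝔼 c, f c := by
  classical
  have : Nonempty A := ⟨b⟩
  have h_indicator : 𝔼 c, f c * (if c = b then (Fintype.card A : ℝ) else 0) = f b := by
    simp only [mul_ite, mul_zero, Fintype.expect_eq_sum_div_card, Finset.sum_ite_eq',
      Finset.mem_univ, if_true]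
    exact mul_div_cancel_right₀ _ (Nat.cast_ne_zero.2 Fintype.card_ne_zero)
  simp only [centredIndicator, mul_sub, mul_one, Finset.expect_sub_distrib, h_indicator]

theorem sum_sq_expect_update_sub_le (I : Finset ι) (b : A) {φ : (ι → A) → ℝ} {C : ℝ}
    (hφ : ∀ x, |φ x| ≤ C) :
    ∑ i ∈ I, (𝔼 x, φ (update x i b) - 𝔼 x, φ x) ^ 2 ≤ Fintype.card A * C ^ 2 := by
  have : Nonempty A := ⟨b⟩
  let u (i : ι) (x : ι → A) : ℝ := centredIndicator b (x i)
  have h_coeff (i : ι) : 𝔼 x, φ (update x i b) - 𝔼 x, φ x = 𝔼 x, φ x * u i x := by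
    rw [← expect_expect_update i φ, ← expect_expect_update i fun x => φ x * u i x,
      ← Finset.expect_sub_distrib]
    simp only [u, update_self, expect_mul_centredIndicator]
  have h_sq (i : ι) : 𝔼 x, u i x ^ 2 ≤ Fintype.card A := by
    rw [← expect_expect_update i]
    simp only [u, update_self, sq, expect_mul_centredIndicator, Fintype.expect_const]
    have h_mean : 𝔼 c, centredIndicator b c = 0 := by
      simpa using expect_mul_centredIndicator b fun _ => 1
    rw [h_mean, sub_zero, centredIndicator, if_pos rfl]
    exact sub_le_self _ zero_le_one
  have h_orth (i j : ι) (hij : i ≠ j) : 𝔼 x, u i x * u j x = 0 := by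
    rw [← expect_expect_update j]
    simp only [u, update_self, update_of_ne hij, expect_mul_centredIndicator, Fintype.expect_const,
      sub_self, Finset.expect_const_zero]
  simp only [h_coeff]
  exact sum_sq_expect_mul_le (by exact_mod_cast Fintype.card_pos) (fun i _ => h_sq i)
    (fun i _ j _ => h_orth i j)
    (Finset.expect_le Finset.univ_nonempty fun x _ => sq_le_sq' (neg_le_of_abs_le (hφ x))
      (le_of_abs_le (hφ x)))

end Bessel

section WeakStar

open Filter Topology

theorem tendsto_expect {ι κ : Type*} [Fintype ι] {l : Filter κ} {f : ι → κ → ℝ} {a : ι → ℝ}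
    (h : ∀ i, Tendsto (f i) l (𝓝 (a i))) : Tendsto (fun n => 𝔼 i, f i n) l (𝓝 (𝔼 i, a i)) := by
  simp only [Fintype.expect_eq_sum_div_card]
  exact (tendsto_finsetSum _ fun i _ => h i).div_const _

variable {G F : Type*} [Group G] [NormedAddCommGroup F] [NormedSpace ℝ F]

/-- The contragredient action as a linear representation. -/
noncomputable def dualRep (ρ : G →* (F ≃ₗᵢ[ℝ] F)) : Representation ℝ G (StrongDual ℝ F) where
  toFun g :=
    { toFun := contragredient ρ g
      map_add' := fun _ _ => rfl
      map_smul' := fun _ _ => rfl }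
  map_one' := by
    ext φ v
    change φ (ρ 1⁻¹ v) = φ v
    rw [inv_one, map_one, LinearIsometryEquiv.coe_one, id]
  map_mul' g h := by
    ext φ v
    change φ (ρ (g * h)⁻¹ v) = φ (ρ h⁻¹ (ρ g⁻¹ v))
    rw [mul_inv_rev, map_mul, LinearIsometryEquiv.coe_mul, Function.comp_apply]

theorem dualRep_apply (ρ : G →* (F ≃ₗᵢ[ℝ] F)) (g : G) (φ : StrongDual ℝ F) (v : F) :
    dualRep ρ g φ v = φ (ρ g⁻¹ v) := rfl

theorem norm_dualRep_apply (ρ : G →* (F ≃ₗᵢ[ℝ] F)) (g : G) (φ : StrongDual ℝ F) :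
    ‖dualRep ρ g φ‖ = ‖φ‖ :=
  φ.opNorm_comp_linearIsometryEquiv (ρ g⁻¹)

theorem expect_strongDual_apply {ι : Type*} [Fintype ι] (φ : ι → StrongDual ℝ F) (v : F) :
    (𝔼 i, φ i) v = 𝔼 i, φ i v := by
  simp only [Finset.expect, smul_apply, sum_apply]

theorem exists_weakStar_limit {ι : Type*} (U : Ultrafilter ι) {φ : ι → StrongDual ℝ F} {C : ℝ}
    (hφ : ∀ i, ‖φ i‖ ≤ C) :
    ∃ L : StrongDual ℝ F, ‖L‖ ≤ C ∧ ∀ v, Tendsto (fun i => φ i v) U (𝓝 (L v)) := by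
  have h_ball : (U.map fun i => StrongDual.toWeakDual (φ i) : Filter (WeakDual ℝ F)) ≤
      𝓟 (WeakDual.toStrongDual ⁻¹' Metric.closedBall (0 : StrongDual ℝ F) C) :=
    tendsto_principal.2 <| .of_forall fun i => mem_closedBall_zero_iff.2 (hφ i)
  obtain ⟨L, hL, hl⟩ := (WeakDual.isCompact_closedBall (𝕜 := ℝ) 0 C).ultrafilter_le_nhds _ h_ball
  exact ⟨WeakDual.toStrongDual L, mem_closedBall_zero_iff.1 hL,
    fun v => ((WeakDual.eval_continuous v).tendsto L).comp hl⟩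

theorem exists_weakStar_limit_isEquivariant {ι : Type*} (U : Ultrafilter ι)
    {ρ : G →* (F ≃ₗᵢ[ℝ] F)} {m : ℕ} {b : ι → (Fin m → G) → StrongDual ℝ F} {C : ℝ}
    (hb : ∀ i, IsEquivariant (dualRep ρ) (b i)) (hC : ∀ i y, ‖b i y‖ ≤ C) :
    ∃ B : (Fin m → G) → StrongDual ℝ F, IsEquivariant (dualRep ρ) B ∧ (∀ y, ‖B y‖ ≤ C) ∧
      ∀ y v, Tendsto (fun i => homDelta (b i) y v) U (𝓝 (homDelta B y v)) := by
  choose B hBC hB using fun y => exists_weakStar_limit U fun i => hC i y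
  refine ⟨B, fun h y => ?_, hBC, fun y v => ?_⟩
  · ext v
    refine tendsto_nhds_unique (hB (h • y) v) ?_
    simp only [hb _ h y]
    exact hB y (ρ h⁻¹ v)
  · simp only [homDelta, sum_apply, smul_apply]
    exact tendsto_finsetSum _ fun j _ => (hB _ v).const_smul _

variable [TopologicalSpace.SeparableSpace (StrongDual ℝ F)] {J : Type*} [Finite J]

-- Countably many weak-* closed balls of radius `ε / 2` cover, so one of them has interior in `K`.
theorem exists_isOpen_inter_norm_sub_le {K : Set (J → WeakDual ℝ F)} (hK : IsCompact K)
    (hne : K.Nonempty) {ε : ℝ} (hε : 0 < ε) :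
    ∃ O : Set (J → WeakDual ℝ F), IsOpen O ∧ (O ∩ K).Nonempty ∧
      ∀ φ ∈ O ∩ K, ∀ ψ ∈ O ∩ K, ∀ j,
        ‖WeakDual.toStrongDual (φ j) - WeakDual.toStrongDual (ψ j)‖ ≤ ε := by
  have : CompactSpace K := isCompact_iff_compactSpace.1 hK
  have : Nonempty K := hne.to_subtype
  let d := TopologicalSpace.denseSeq (StrongDual ℝ F)
  let B (e : J → ℕ) : Set K :=
    ⋂ j, {φ | WeakDual.toStrongDual (φ.1 j) ∈ Metric.closedBall (d (e j)) (ε / 2)}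
  have h_closed (e : J → ℕ) : IsClosed (B e) := isClosed_iInter fun j =>
    (WeakDual.isClosed_closedBall (d (e j)) (ε / 2)).preimage
      ((continuous_apply j).comp continuous_subtype_val)
  have h_cover : ⋃ e, B e = Set.univ := Set.eq_univ_of_forall fun φ => by
    choose e he using fun j => (TopologicalSpace.denseRange_denseSeq _).exists_dist_lt
      (WeakDual.toStrongDual (φ.1 j)) (half_pos hε)
    exact Set.mem_iUnion.2 ⟨e, Set.mem_iInter.2 fun j => (he j).le⟩
  obtain ⟨e, φ, hφ⟩ := nonempty_interior_of_iUnion_of_closed h_closed h_cover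
  obtain ⟨O, hO, hOe⟩ := isOpen_induced_iff.1 (isOpen_interior (s := B e))
  have h_ball (ψ) (hψ : ψ ∈ O ∩ K) (j : J) :
      dist (WeakDual.toStrongDual (ψ j)) (d (e j)) ≤ ε / 2 := by
    have hψ' : (⟨ψ, hψ.2⟩ : K) ∈ interior (B e) := hOe ▸ hψ.1
    exact Set.mem_iInter.1 (interior_subset hψ') j
  refine ⟨O, hO, ⟨φ, ?_, φ.2⟩, fun ψ hψ χ hχ j => ?_⟩
  · rw [← hOe] at hφ
    exact hφ
  · rw [← dist_eq_norm]
    linarith [dist_triangle_right (WeakDual.toStrongDual (ψ j)) (WeakDual.toStrongDual (χ j))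
      (d (e j)), h_ball ψ hψ j, h_ball χ hχ j]

theorem exists_eventually_norm_sub_le {P : Type*} [Nonempty P] {M : P → J → StrongDual ℝ F}
    {C : ℝ} (hM : ∀ p j, ‖M p j‖ ≤ C) {ε : ℝ} (hε : 0 < ε) :
    ∃ p, ∀ᶠ q in ⨅ (j) (v), comap (fun q => M q j v) (𝓝 (M p j v)),
      ∀ j, ‖M q j - M p j‖ ≤ ε := by
  let W (p : P) (j : J) : WeakDual ℝ F := StrongDual.toWeakDual (M p j)
  have h_compact : IsCompact (closure (Set.range W)) := by
    have h_ball := isCompact_univ_pi fun _ : J =>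
      WeakDual.isCompact_closedBall (0 : StrongDual ℝ F) C
    refine h_ball.closure_of_subset ?_
    rintro _ ⟨p, rfl⟩ j -
    exact mem_closedBall_zero_iff.2 (hM p j)
  obtain ⟨O, hO, ⟨φ, hφO, hφ⟩, h_norm⟩ :=
    exists_isOpen_inter_norm_sub_le h_compact (Set.range_nonempty W).closure hε
  obtain ⟨_, hpO, p, rfl⟩ := mem_closure_iff.1 hφ O hO hφO
  let l : Filter P := ⨅ (j) (v), comap (fun q => M q j v) (𝓝 (M p j v))
  have h_eval (j : J) (v : F) : Tendsto (fun q => M q j v) l (𝓝 (M p j v)) :=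
    tendsto_iff_comap.2 ((iInf_le _ j).trans (iInf_le _ v))
  have h_lim : Tendsto W l (𝓝 (W p)) := tendsto_pi_nhds.2 fun j =>
    tendsto_iff_forall_eval_tendsto_topDualPairing.2 (h_eval j)
  refine ⟨p, ?_⟩
  filter_upwards [h_lim (hO.mem_nhds hpO)] with q hq j
  exact h_norm _ ⟨hq, subset_closure ⟨q, rfl⟩⟩ _ ⟨hpO, subset_closure ⟨p, rfl⟩⟩ j

end WeakStar

section RandomCoordinates

open Filter Topology Function

theorem tendsto_cofinite_zero_of_sum_sq_le {ι : Type*} {u : ι → ℝ} {D : Finset ι} {B : ℝ}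
    (h : ∀ I : Finset ι, (∀ i ∈ I, i ∉ D) → ∑ i ∈ I, u i ^ 2 ≤ B) :
    Tendsto u cofinite (𝓝 0) := by
  classical
  have h_summable : Summable fun i => if i ∉ D then u i ^ 2 else 0 := by
    refine summable_of_sum_le (c := B) (fun i => ?_) fun I => ?_
    · split_ifs
      exacts [le_rfl, sq_nonneg _]
    · rw [← Finset.sum_filter]
      exact h _ fun i hi => (Finset.mem_filter.1 hi).2
  have h_sq : Tendsto (fun i => u i ^ 2) cofinite (𝓝 0) := by
    refine h_summable.tendsto_cofinite_zero.congr' ?_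
    filter_upwards [D.finite_toSet.compl_mem_cofinite] with i hi
    exact if_pos hi
  refine (tendsto_zero_iff_abs_tendsto_zero u).2 ?_
  simpa [Real.sqrt_sq_eq_abs, Function.comp_def] using h_sq.sqrt

variable {A : Type*}

/-- The sequence whose coordinates with index below `N` and outside `D` are those of `x`, the
other ones being pinned to the coordinates of `a`. For uniformly random `x` this is the
conditioning of a random sequence on its coordinates in `D`. -/
def pinnedSeq (D : Finset ℕ) (a : ℕ → A) {N : ℕ} (x : Fin N → A) (l : ℕ) : A :=
  if l ∈ D then a l else if hl : l < N then x ⟨l, hl⟩ else a l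

theorem update_pinnedSeq (D : Finset ℕ) (a : ℕ → A) {N : ℕ} (x : Fin N → A) (i : ℕ) (b : A) :
    update (pinnedSeq D a x) i b = pinnedSeq (insert i D) (update a i b) x := by
  funext l
  obtain rfl | hl := eq_or_ne l i
  · simp [pinnedSeq]
  · simp [pinnedSeq, hl]

theorem pinnedSeq_update {D : Finset ℕ} (a : ℕ → A) {N : ℕ} (x : Fin N → A) {i : Fin N}
    (hi : (i : ℕ) ∉ D) (b : A) :
    pinnedSeq D a (update x i b) = update (pinnedSeq D a x) i b := by
  funext l
  obtain rfl | hl := eq_or_ne l i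
  · simp [pinnedSeq, hi]
  · have h_ne (h : l < N) : (⟨l, h⟩ : Fin N) ≠ i := fun h' => hl (congrArg Fin.val h')
    simp [pinnedSeq, hl, h_ne]

variable [Fintype A] {U : Ultrafilter ℕ}

theorem tendsto_limit_expect_pinnedSeq (hU : (U : Filter ℕ) ≤ atTop) {θ : ℕ → (ℕ → A) → ℝ} {C : ℝ}
    (hθ : ∀ N a, |θ N a| ≤ C) {m : Finset ℕ → (ℕ → A) → ℝ}
    (hm : ∀ D a, Tendsto (fun N => 𝔼 x : Fin N → A, θ N (pinnedSeq D a x)) U (𝓝 (m D a)))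
    (D : Finset ℕ) (a : ℕ → A) (b : A) :
    Tendsto (fun i => m (insert i D) (update a i b)) cofinite (𝓝 (m D a)) := by
  rw [← tendsto_sub_nhds_zero_iff]
  refine tendsto_cofinite_zero_of_sum_sq_le (D := D) (B := Fintype.card A * C ^ 2) fun I hI => ?_
  have h_lim := tendsto_finsetSum I fun i _ =>
    ((hm (insert i D) (update a i b)).sub (hm D a)).pow 2
  refine le_of_tendsto h_lim ?_
  filter_upwards [hU (eventually_gt_atTop (I.sup id))] with N hN
  have hIN (i) (hi : i ∈ I) : i < N := (Finset.le_sup (f := id) hi).trans_lt hN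
  have h_bessel := sum_sq_expect_update_sub_le (I.attachFin hIN) b fun x => hθ N (pinnedSeq D a x)
  rw [← Finset.map_valEmbedding_attachFin hIN, Finset.sum_map]
  refine le_of_eq_of_le (Finset.sum_congr rfl fun i hi => ?_) h_bessel
  have hiD : (i : ℕ) ∉ D := hI _ (Finset.mem_attachFin hIN |>.1 hi)
  simp only [Fin.valEmbedding_apply, ← update_pinnedSeq, pinnedSeq_update a _ hiD]

theorem exists_update_pinnedSeq_limit_near [Nonempty A] (hU : (U : Filter ℕ) ≤ atTop) {F J : Type*}
    [NormedAddCommGroup F] [NormedSpace ℝ F] [TopologicalSpace.SeparableSpace (StrongDual ℝ F)]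
    [Finite J] {Θ : ℕ → (ℕ → A) → J → StrongDual ℝ F} {C : ℝ} (hΘ : ∀ N a j, ‖Θ N a j‖ ≤ C)
    {ε : ℝ} (hε : 0 < ε) :
    ∃ (D : Finset ℕ) (a : ℕ → A) (i : ℕ) (c : J → StrongDual ℝ F) (L : A → J → StrongDual ℝ F),
      ∀ b j, ‖L b j - c j‖ ≤ ε ∧ ∀ v, Tendsto
        (fun N => 𝔼 x : Fin N → A, Θ N (update (pinnedSeq D a x) i b) j v) U (𝓝 (L b j v)) := by
  choose M hMC hM using fun (p : Finset ℕ × (ℕ → A)) j => exists_weakStar_limit U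
    fun N => norm_expect_le_of_forall_le fun x : Fin N → A => hΘ N (pinnedSeq p.1 p.2 x) j
  simp only [expect_strongDual_apply] at hM
  obtain ⟨⟨D, a⟩, h_near⟩ := exists_eventually_norm_sub_le hMC hε
  have h_ev (b : A) : ∀ᶠ i in cofinite, ∀ j, ‖M (insert i D, update a i b) j - M (D, a) j‖ ≤ ε := by
    refine Tendsto.eventually ?_ h_near
    refine tendsto_iInf.2 fun j => tendsto_iInf.2 fun v => tendsto_comap_iff.2 ?_
    exact tendsto_limit_expect_pinnedSeq hU (m := fun D a => M (D, a) j v)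
      (fun N a => (Θ N a j).le_of_opNorm_le (hΘ N a j) v) (fun D a => hM (D, a) j v) D a b
  obtain ⟨i, hi⟩ := (eventually_all.2 h_ev).exists
  refine ⟨D, a, i, M (D, a), fun b => M (insert i D, update a i b), fun b j => ⟨hi b j, ?_⟩⟩
  simpa only [update_pinnedSeq] using hM (insert i D, update a i b) j

end RandomCoordinates

section CommutingConjugates

variable {G : Type*} [Group G]

/-- The groups all of whose finite subsets commute elementwise with one of their conjugates. -/
def HasCommutingConjugates (G : Type*) [Group G] : Prop :=
  ∀ S : Finset G, ∃ t : G, ∀ a ∈ S, ∀ b ∈ S, Commute a (t * b * t⁻¹)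

theorem HasCommutingConjugates.exists_seq (hG : HasCommutingConjugates G) (S : Finset G) :
    ∃ t : ℕ → G, ∀ l i, l < i → ∀ a ∈ S, ∀ b ∈ S,
      Commute (t i * a * (t i)⁻¹) (t l * b * (t l)⁻¹) := by
  classical
  obtain ⟨t, -, ht⟩ := exists_seq_of_forall_finset_exists (fun _ : G => True)
    (fun s t => ∀ a ∈ S, ∀ b ∈ S, Commute (t * a * t⁻¹) (s * b * s⁻¹)) fun s _ => by
      obtain ⟨t, ht⟩ := hG (S ∪ s.biUnion fun u => S.image fun b => u * b * u⁻¹)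
      refine ⟨t, trivial, fun u hu a ha b hb => (ht _ ?_ _ ?_).symm⟩
      · exact Finset.mem_union_right _
          (Finset.mem_biUnion.2 ⟨u, hu, Finset.mem_image_of_mem _ hb⟩)
      · exact Finset.mem_union_left _ ha
  exact ⟨t, ht⟩

theorem prod_map_range_update {M : Type*} [Monoid M] {u : ℕ → M} {N i : ℕ} (hi : i < N) {c : M}
    (hc : ∀ l < i, Commute c (u l)) :
    ((List.range N).map (Function.update u i c)).prod =
      c * ((List.range N).map (Function.update u i 1)).prod := by
  induction N with
  | zero => exact absurd hi i.not_lt_zero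
  | succ N ih =>
    rw [List.prod_range_succ, List.prod_range_succ]
    obtain rfl | hi := Nat.lt_succ_iff_lt_or_eq.1 hi |>.symm
    · have h_init (d : M) : (List.range i).map (Function.update u i d) = (List.range i).map u :=
        List.map_congr_left fun l hl => Function.update_of_ne (List.mem_range.1 hl).ne _ _
      have h_comm : Commute c ((List.range i).map u).prod :=
        Commute.list_prod_right _ _ fun x hx => by
          obtain ⟨l, hl, rfl⟩ := List.mem_map.1 hx
          exact hc l (List.mem_range.1 hl)
      rw [h_init, h_init, Function.update_self, Function.update_self, mul_one, h_comm.eq]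
    · rw [ih hi, mul_assoc, Function.update_of_ne hi.ne', Function.update_of_ne hi.ne']

/-- The product of the conjugates `t l * a l * (t l)⁻¹` with `l < N`, in increasing order of `l`. -/
def conjProd (t : ℕ → G) (N : ℕ) (a : ℕ → G) : G :=
  ((List.range N).map fun l => t l * a l * (t l)⁻¹).prod

theorem conjProd_update {t a : ℕ → G} {N i : ℕ} (hi : i < N) {g : G}
    (hg : ∀ l < i, Commute (t i * g * (t i)⁻¹) (t l * a l * (t l)⁻¹)) :
    conjProd t N (Function.update a i g) =
      t i * g * (t i)⁻¹ * conjProd t N (Function.update a i 1) := by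
  have h_update (h : G) : (fun l => t l * Function.update a i h l * (t l)⁻¹) =
      Function.update (fun l => t l * a l * (t l)⁻¹) i (t i * h * (t i)⁻¹) :=
    funext (Function.apply_update (fun l b => t l * b * (t l)⁻¹) a i h)
  rw [conjProd, conjProd, h_update, h_update, mul_one, mul_inv_cancel,
    prod_map_range_update hi hg]

end CommutingConjugates

section AlmostConstantPrimitive

open Filter Topology Function

variable {G : Type*} [Group G] {m : ℕ} {S : Finset G} {t : ℕ → G}

/-- The random translation vector `ψ` of `symmPrism`: the product of conjugates of the `k`-th
coordinates of `x`, with the `i`-th factor removed and the rest multiplied by `(t i)⁻¹`, so that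
left multiplication by `g` puts the conjugate of `g` back in the `i`-th place. -/
def conjProdAway (t : ℕ → G) (N i : ℕ) (x : ℕ → Fin (m + 1) → S) (k : Fin (m + 1)) : G :=
  (t i)⁻¹ * conjProd t N (update (fun l => (x l k : G)) i 1)

theorem mul_conjProdAway
    (ht : ∀ l i, l < i → ∀ a ∈ S, ∀ b ∈ S, Commute (t i * a * (t i)⁻¹) (t l * b * (t l)⁻¹))
    {N i : ℕ} (hi : i < N) (x : ℕ → Fin (m + 1) → S) (b : Fin (m + 1) → S) (k : Fin (m + 1)) :
    b k * conjProdAway t N i x k = (t i)⁻¹ * conjProd t N fun l => update x i b l k := by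
  have h_update : (fun l => (update x i b l k : G)) = update (fun l => (x l k : G)) i (b k) :=
    funext (apply_update (fun _ b => (b k : G)) x i b)
  rw [h_update, conjProd_update hi fun l hl => ht l i hl _ (b k).2 _ (x l k).2, conjProdAway]
  group

theorem add_homDelta_symmPrism_conjProdAway {E : Type*} [AddCommGroup E] [Module ℝ E]
    [Module ℚ≥0 E] {π : Representation ℝ G E} {Φ : (Fin (m + 1) → G) → E}
    (hΦ : IsEquivariant π Φ) (hδ : homDelta Φ = 0)
    (ht : ∀ l i, l < i → ∀ a ∈ S, ∀ b ∈ S, Commute (t i * a * (t i)⁻¹) (t l * b * (t l)⁻¹))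
    {N i : ℕ} (hi : i < N) (x : ℕ → Fin (m + 1) → S) (y : Fin (m + 1) → S) :
    Φ (Subtype.val ∘ y) + homDelta (symmPrism Φ (conjProdAway t N i x)) (Subtype.val ∘ y) =
      𝔼 σ : Equiv.Perm (Fin (m + 1)),
        π (t i)⁻¹ (Φ fun k => conjProd t N fun l => update x i (y ∘ σ.symm) l (σ k)) := by
  rw [← expect_perm_eq_add_homDelta_symmPrism hδ]
  refine Finset.expect_congr rfl fun σ _ => ?_
  rw [← hΦ]
  congr 1
  funext k
  simpa using! mul_conjProdAway ht hi x (y ∘ σ.symm) (σ k)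

theorem add_homDelta_expect_symmPrism_conjProdAway {E : Type*} [AddCommGroup E] [Module ℝ E]
    [Module ℚ≥0 E] [IsScalarTower ℚ≥0 ℝ E] {π : Representation ℝ G E} {Φ : (Fin (m + 1) → G) → E}
    (hΦ : IsEquivariant π Φ) (hδ : homDelta Φ = 0)
    (ht : ∀ l i, l < i → ∀ a ∈ S, ∀ b ∈ S, Commute (t i * a * (t i)⁻¹) (t l * b * (t l)⁻¹))
    {N i : ℕ} (hi : i < N) {Ω : Type*} [Fintype Ω] [Nonempty Ω] (x : Ω → ℕ → Fin (m + 1) → S)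
    (y : Fin (m + 1) → S) :
    Φ (Subtype.val ∘ y) +
        homDelta (fun v => 𝔼 ω, symmPrism Φ (conjProdAway t N i (x ω)) v) (Subtype.val ∘ y) =
      𝔼 σ : Equiv.Perm (Fin (m + 1)), π (t i)⁻¹ (𝔼 ω, Φ fun k =>
        conjProd t N fun l => update (x ω) i (y ∘ σ.symm) l (σ k)) := by
  have h_expect (φ : Ω → E) : π (t i)⁻¹ (𝔼 ω, φ ω) = 𝔼 ω, π (t i)⁻¹ (φ ω) :=
    map_expect ((π (t i)⁻¹).restrictScalars ℚ≥0) _ _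
  rw [homDelta_expect, ← Fintype.expect_const (ι := Ω) (Φ _), ← Finset.expect_add_distrib]
  simp only [add_homDelta_symmPrism_conjProdAway hΦ hδ ht hi, h_expect]
  exact Finset.expect_comm _ _ _

variable {F : Type*} [NormedAddCommGroup F] [NormedSpace ℝ F]
  [TopologicalSpace.SeparableSpace (StrongDual ℝ F)] {ρ : G →* (F ≃ₗᵢ[ℝ] F)}

theorem exists_norm_add_homDelta_sub_le (hG : HasCommutingConjugates G)
    {Φ : (Fin (m + 1) → G) → StrongDual ℝ F} (hΦ : IsEquivariant (dualRep ρ) Φ)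
    (hδ : homDelta Φ = 0) {C : ℝ} (hC : ∀ y, ‖Φ y‖ ≤ C) (hS : S.Nonempty) {ε : ℝ} (hε : 0 < ε) :
    ∃ b : (Fin m → G) → StrongDual ℝ F, IsEquivariant (dualRep ρ) b ∧ (∀ y, ‖b y‖ ≤ m * C) ∧
      ∃ c, ∀ y : Fin (m + 1) → S,
        ‖Φ (Subtype.val ∘ y) + homDelta b (Subtype.val ∘ y) - c‖ ≤ ε := by
  have : Nonempty S := hS.to_subtype
  obtain ⟨t, ht⟩ := hG.exists_seq S
  obtain ⟨D, a, i, c, L, hL⟩ := exists_update_pinnedSeq_limit_near (U := hyperfilter ℕ)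
    Nat.hyperfilter_le_atTop (A := Fin (m + 1) → S) (J := Equiv.Perm (Fin (m + 1)))
    (Θ := fun N x σ => Φ fun k => conjProd t N fun l => x l (σ k)) (fun _ _ _ => hC _) hε
  let bN (N : ℕ) (y : Fin m → G) : StrongDual ℝ F :=
    𝔼 x : Fin N → Fin (m + 1) → S, symmPrism Φ (conjProdAway t N i (pinnedSeq D a x)) y
  obtain ⟨b, hb, hbC, hb_lim⟩ := exists_weakStar_limit_isEquivariant (hyperfilter ℕ) (b := bN)
    (fun N => isEquivariant_expect fun x => isEquivariant_symmPrism hΦ _)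
    (fun N y => norm_expect_le_of_forall_le fun x => norm_symmPrism_le hC _ y)
  refine ⟨b, hb, hbC, 𝔼 σ, dualRep ρ (t i)⁻¹ (c σ), fun y => ?_⟩
  have h_limit : Φ (Subtype.val ∘ y) + homDelta b (Subtype.val ∘ y) =
      𝔼 σ : Equiv.Perm (Fin (m + 1)), dualRep ρ (t i)⁻¹ (L (y ∘ σ.symm) σ) := by
    ext v
    have h_left := (hb_lim (Subtype.val ∘ y) v).const_add (Φ (Subtype.val ∘ y) v)
    have h_right := tendsto_expect fun σ : Equiv.Perm (Fin (m + 1)) =>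
      (hL (y ∘ σ.symm) σ).2 (ρ (t i)⁻¹⁻¹ v)
    rw [expect_strongDual_apply]
    refine tendsto_nhds_unique (h_left.congr' ?_) h_right
    filter_upwards [Nat.hyperfilter_le_atTop (eventually_gt_atTop i)] with N hN
    rw [← add_apply, add_homDelta_expect_symmPrism_conjProdAway hΦ hδ ht hN,
      expect_strongDual_apply]
    simp only [dualRep_apply, expect_strongDual_apply]
  rw [h_limit, ← Finset.expect_sub_distrib]
  refine norm_expect_le_of_forall_le fun σ => ?_
  rw [← map_sub, norm_dualRep_apply]
  exact (hL _ _).1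

end AlmostConstantPrimitive

section Vanishing

open Filter Topology

variable {G F : Type*} [Group G] [NormedAddCommGroup F] [NormedSpace ℝ F]
  [TopologicalSpace.SeparableSpace (StrongDual ℝ F)] {ρ : G →* (F ≃ₗᵢ[ℝ] F)} {n : ℕ}
  {Φ : (Fin (n + 2) → G) → StrongDual ℝ F} {C : ℝ}

theorem exists_norm_sub_homDelta_le (hG : HasCommutingConjugates G)
    (hΦ : IsEquivariant (dualRep ρ) Φ) (hδ : homDelta Φ = 0) (hC : ∀ y, ‖Φ y‖ ≤ C) (S : Finset G)
    {ε : ℝ} (hε : 0 < ε) :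
    ∃ b : (Fin (n + 1) → G) → StrongDual ℝ F, IsEquivariant (dualRep ρ) b ∧
      (∀ y, ‖b y‖ ≤ (n + 2) ^ 2 * C) ∧ ∀ y, (∀ k, y k ∈ S) → ‖Φ y - homDelta b y‖ ≤ ε := by
  classical
  obtain ⟨b, hb, hbC, c, hc⟩ := exists_norm_add_homDelta_sub_le hG hΦ hδ hC
    (Finset.insert_nonempty 1 S) (half_pos hε)
  let K (y : Fin (n + 2) → G) : StrongDual ℝ F := Φ y + homDelta b y
  have hK : homDelta K = 0 := funext fun y => by
    simp only [K, homDelta_add, hδ, homDelta_homDelta, Pi.zero_apply, add_zero]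
  have hK_equivariant : IsEquivariant (dualRep ρ) K := fun h y => by
    simp only [K, hΦ h y, hb.homDelta h y, map_add]
  have hKc (y : Fin (n + 2) → G) (hy : ∀ k, y k ∈ S) : ‖K y - c‖ ≤ ε / 2 :=
    hc fun k => ⟨y k, Finset.mem_insert_of_mem (hy k)⟩
  refine ⟨fun y => duplicateHead K y - b y, fun h y => ?_, fun y => ?_, fun y hy => ?_⟩
  · rw [map_sub, ← hb, ← hK_equivariant.duplicateHead]
  · have hKC := norm_add_le_of_le (hC (Fin.cons (y 0) y)) (norm_homDelta_le hbC (Fin.cons (y 0) y))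
    refine (norm_sub_le_of_le hKC (hbC y)).trans_eq ?_
    push_cast
    ring
  · have h_tail : ‖duplicateHead K (Fin.tail y) - c‖ ≤ ε / 2 :=
      hKc _ (Fin.cases (hy _) fun k => hy k.succ)
    calc ‖Φ y - homDelta (fun v => duplicateHead K v - b v) y‖
        = ‖(K y - c) - (duplicateHead K (Fin.tail y) - c)‖ := by
          rw [homDelta_sub, homDelta_duplicateHead hK, sub_sub_sub_cancel_right, sub_sub_eq_add_sub]
      _ ≤ ε / 2 + ε / 2 := norm_sub_le_of_le (hKc y hy) h_tail
      _ = ε := add_halves ε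

theorem exists_homDelta_eq (hG : HasCommutingConjugates G) (hΦ : IsEquivariant (dualRep ρ) Φ)
    (hC : ∀ y, ‖Φ y‖ ≤ C) (hδ : homDelta Φ = 0) :
    ∃ b : (Fin (n + 1) → G) → StrongDual ℝ F,
      IsEquivariant (dualRep ρ) b ∧ IsBddCochain b ∧ homDelta b = Φ := by
  classical
  choose bq hb hbC hbΦ using fun q : Finset G × ℕ =>
    exists_norm_sub_homDelta_le hG hΦ hδ hC q.1 (ε := 1 / ((q.2 : ℝ) + 1)) (by positivity)
  let U : Ultrafilter (Finset G × ℕ) := Ultrafilter.of atTop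
  have hU : (U : Filter (Finset G × ℕ)) ≤ atTop := Ultrafilter.of_le _
  obtain ⟨b, hb, hbC, hb_lim⟩ := exists_weakStar_limit_isEquivariant U hb hbC
  refine ⟨b, hb, ⟨_, hbC⟩, funext fun y => ?_⟩
  have h_tolerance : Tendsto (fun q : Finset G × ℕ => 1 / ((q.2 : ℝ) + 1)) U (𝓝 0) :=
    (tendsto_one_div_add_atTop_nhds_zero_nat.comp
      (tendsto_snd.mono_left prod_atTop_atTop_eq.ge)).mono_left hU
  have h_norm : Tendsto (fun q => homDelta (bq q) y) U (𝓝 (Φ y)) := by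
    refine tendsto_iff_norm_sub_tendsto_zero.2 (squeeze_zero' (.of_forall fun _ => norm_nonneg _)
      (hU ?_) h_tolerance)
    filter_upwards [eventually_ge_atTop (Finset.univ.image y, 0)] with q hq
    rw [norm_sub_rev]
    exact hbΦ q y fun k => hq.1 (Finset.mem_image_of_mem y (Finset.mem_univ k))
  ext v
  exact tendsto_nhds_unique (hb_lim y v) (((continuous_eval_const v).tendsto _).comp h_norm)

theorem hbVanish_contragredient (hG : HasCommutingConjugates G) (ρ : G →* (F ≃ₗᵢ[ℝ] F)) :
    HbVanish (contragredient ρ) :=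
  hbVanish_of_homogeneous (π := dualRep ρ) (norm_dualRep_apply ρ) fun _ _ _ => exists_homDelta_eq hG

end Vanishing

section TrivialCoefficients

variable {G E E' : Type*} [NormedAddCommGroup E] [NormedSpace ℝ E] [NormedAddCommGroup E']
  [NormedSpace ℝ E']

theorem IsBddCochain.clm_comp {n : ℕ} {f : (Fin n → G) → E} (hf : IsBddCochain f)
    (T : E →L[ℝ] E') : IsBddCochain (T ∘ f) := by
  obtain ⟨C, hC⟩ := hf
  exact ⟨‖T‖ * C, fun g => T.le_opNorm_of_le (hC g)⟩

variable [Group G] {π : G → E → E} {π' : G → E' → E'}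

theorem bddDelta_comp_of_intertwining (T : E →L[ℝ] E') (hT : ∀ g v, T (π g v) = π' g (T v)) {n : ℕ}
    (f : (Fin n → G) → E) : bddDelta π' n (T ∘ f) = T ∘ bddDelta π n f := by
  funext g
  simp only [bddDelta, Function.comp_apply, map_add, map_sum, map_smul, hT]

theorem HbVanish.of_equiv (h : HbVanish π) (e : E ≃L[ℝ] E') (he : ∀ g v, e (π g v) = π' g (e v)) :
    HbVanish π' := by
  intro n f hf hδ
  have h_cancel : (e : E →L[ℝ] E') ∘ (e.symm : E' →L[ℝ] E) ∘ f = f :=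
    funext fun g => e.apply_symm_apply (f g)
  have he_symm (g : G) (v : E') : e.symm (π' g v) = π g (e.symm v) := by
    rw [e.symm_apply_eq, he, e.apply_symm_apply]
  have h_cocycle : bddDelta π (n + 1) ((e.symm : E' →L[ℝ] E) ∘ f) = 0 := by
    rw [bddDelta_comp_of_intertwining _ he_symm, hδ]
    exact funext fun _ => map_zero e.symm
  obtain ⟨b, hb, hbf⟩ := h n _ (hf.clm_comp (e.symm : E' →L[ℝ] E)) h_cocycle
  refine ⟨_, hb.clm_comp (e : E →L[ℝ] E'), ?_⟩
  rw [bddDelta_comp_of_intertwining _ he, hbf, h_cancel]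

theorem boundedlyAcyclic_of_hasCommutingConjugates (hG : HasCommutingConjugates G) :
    BoundedlyAcyclic G := by
  have : ProperSpace (StrongDual ℝ ℝ) := FiniteDimensional.proper ℝ _
  exact (hbVanish_contragredient hG (1 : G →* (ℝ ≃ₗᵢ[ℝ] ℝ))).of_equiv
    (ContinuousLinearMap.toSpanSingletonCLE (𝕜 := ℝ) (E := ℝ)).symm fun _ _ => rfl

end TrivialCoefficients

section DisjointSupports

variable {G Z : Type*} [Group G] [MulAction G Z] [FaithfulSMul G Z]

theorem commute_of_forall_smul_eq_or_smul_eq {a b : G} (h : ∀ z : Z, a • z = z ∨ b • z = z) :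
    Commute a b := by
  have h_perm : Commute (MulAction.toPermHom G Z a) (MulAction.toPermHom G Z b) :=
    Equiv.Perm.Disjoint.commute h
  exact h_perm.of_map MulAction.toPerm_injective

open Pointwise in
theorem hasCommutingConjugates_of_disjoint_smul {Z₀ : Set Z} {g : G}
    (hconj : ∀ S : Finset G, ∃ t : G, ∀ h ∈ S, ∀ z : Z, z ∉ Z₀ → (t * h * t⁻¹) • z = z)
    (hdisj : Disjoint (g • Z₀) Z₀) : HasCommutingConjugates G := by
  intro S
  obtain ⟨t, ht⟩ := hconj S
  refine ⟨t⁻¹ * g * t, fun a ha b hb => ?_⟩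
  have h_commute : Commute (t * a * t⁻¹) (g * (t * b * t⁻¹) * g⁻¹) := by
    refine commute_of_forall_smul_eq_or_smul_eq fun z : Z => ?_
    by_cases hz : z ∈ Z₀
    · have hgz : g⁻¹ • z ∉ Z₀ := fun h =>
        Set.disjoint_left.1 hdisj (Set.mem_smul_set_iff_inv_smul_mem.2 h) hz
      right
      rw [mul_smul, mul_smul, ht b hb _ hgz, smul_inv_smul]
    · exact Or.inl (ht a ha z hz)
  rw [← Commute.conj_iff t]
  convert h_commute using 1
  group

end DisjointSupports

theorem vanishing_of_transformation_group_general.{u} {G : Type*} [Group G]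
    (hG : HasCommutingConjugates G) :
    (∀ (F : Type u) [NormedAddCommGroup F] [NormedSpace ℝ F] (ρ : G →* (F ≃ₗᵢ[ℝ] F)),
      TopologicalSpace.SeparableSpace (F →L[ℝ] ℝ) → HbVanish (contragredient ρ)) ∧
    BoundedlyAcyclic G :=
  ⟨fun _ _ _ ρ _ => hbVanish_contragredient hG ρ, boundedlyAcyclic_of_hasCommutingConjugates hG⟩

open Pointwise in
/-- Let `G` act faithfully on a set `Z` with a subset `Z₀ ⊆ Z` and an
element `g ∈ G` such that: (i) every finite subset of `G` can be conjugated so that all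
its elements are supported in `Z₀`; (ii) `g^p • Z₀` is disjoint from `Z₀` for every
integer `p ≥ 1`.  Then `Hb^n(G,E) = 0` for all `n ≥ 1` and all separable dual Banach
`G`-modules `E = F*`; in particular `G` is boundedly acyclic. -/
theorem vanishing_of_transformation_group.{u}
    {G Z : Type*} [Group G] [MulAction G Z] [FaithfulSMul G Z]
    (Z₀ : Set Z) (g : G)
    (hconj : ∀ S : Finset G, ∃ t : G, ∀ h ∈ S, ∀ z : Z, z ∉ Z₀ → (t * h * t⁻¹) • z = z)
    (hdisj : ∀ p : ℤ, 1 ≤ p → Disjoint (g ^ p • Z₀) Z₀) :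
    (∀ (F : Type u) [NormedAddCommGroup F] [NormedSpace ℝ F] [CompleteSpace F]
      (ρ : G →* (F ≃ₗᵢ[ℝ] F)),
      TopologicalSpace.SeparableSpace (F →L[ℝ] ℝ) → HbVanish (contragredient ρ)) ∧
    BoundedlyAcyclic G := by
  have hG : HasCommutingConjugates G :=
    hasCommutingConjugates_of_disjoint_smul hconj (by simpa using hdisj 1 le_rfl)
  have h := vanishing_of_transformation_group_general hG
  exact ⟨fun F _ _ _ => h.1 F, h.2⟩
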